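/- arXiv:2210.11868 — 2 statements merged into one kernel-verified Lean document; each statement's English description precedes it below -/
import Mathlib

section
/- Let d ≥ 3, let γ ∈ P_{W_d}, ψ = W_d γ, C = C_ψ, μ_C the associated measure, and L_t := {x ∈ [0,1]^d : C_ψ(x) = t} for t ∈ [0,1]. Then: (a) if γ is purely atomic (i.e. γ = ∑_j α_j δ_{a_j} for some a_j ∈ (0,∞) and α_j ≥ 0 with ∑_j α_j = 1), then there exists an at most countable set T ⊆ [0,1) such that μ_C(⋃_{t ∈ T} L_t) = 1; (b) if γ is singular with respect to Lebesgue measure on [0,∞) and has no atoms, then μ_C is singular with respect to Lebesgue measure λ_d on [0,1]^d and μ_C(L_t) = 0 for every t ∈ [0,1]. -/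
/-!
The proof rests on the stochastic representation of Archimedean copulas. If `T ∼ γ` and
`S = (S₁, …, S_d)` is uniform on the standard simplex and independent of `T`, then, since
`P(Sᵢ ≥ zᵢ for all i) = (1 - ∑ zᵢ)₊^(d-1)`, conditioning on `T` shows that the vector
`X = (ψ(S₁/T), …, ψ(S_d/T))` has distribution function `C_ψ`; hence `μ` is the law of `X`
(`exists_simplex_law`, `prod_repMap_le`, `ext_of_unit_boxes`, `exists_representation`).
As the margins of `C_ψ` have no atom at `0`, all `Xᵢ` are positive almost surely, so that
`φ(Xᵢ) = Sᵢ/T`, `∑ φ(Xᵢ) = 1/T` and `C_ψ(X) = ψ(1/T)`.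

If `γ` is carried by a countable set `S`, then `C_ψ(X)` lies in the countable set
`{ψ(1/t) : t ∈ S, t > 0} ⊆ [0,1)`, which is the first claim.

If `γ` has no atoms, neither has `ψ(1/T)`, because `t ↦ ψ(1/t)` is injective on the support of `γ`
(`ae_williamson_inv_ne`); so every level set is `μ`-null. If `γ` is carried by a Lebesgue null set
`M`, then `μ` is carried by `{x : 1 / ∑ φ(xᵢ) ∈ M}`. Up to the faces `xᵢ = 1`, this is the image of
`{z : 1 / ∑ zᵢ ∈ M}`, a null set, under the map applying `ψ` to each coordinate. That map is
Lipschitz on each set `[ε,∞)^d`, hence preserves null sets (`volume_level_preimage_eq_zero`).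
-/

open MeasureTheory Set Filter Topology
open scoped ENNReal NNReal Classical

noncomputable section

/-- Extension of a generator `ψ` to `[0,∞]` with the convention `ψ(∞) := 0`. -/
def psiExt (ψ : ℝ → ℝ) (z : ℝ≥0∞) : ℝ := if z = ∞ then 0 else ψ z.toReal

/-- The pseudo-inverse `φ(y) = inf {z ∈ [0,∞] : ψ(z) = y}` of a generator. -/
def pseudoInv (ψ : ℝ → ℝ) (y : ℝ) : ℝ≥0∞ := sInf {z : ℝ≥0∞ | psiExt ψ z = y}

/-- An Archimedean generator: `ψ : [0,∞) → [0,1]` is continuous, non-increasing,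
satisfies `ψ 0 = 1` and `ψ(z) → 0` as `z → ∞`, and is strictly decreasing on
`[0, inf {z ∈ [0,∞] : ψ z = 0}]`. -/
structure IsGenerator (ψ : ℝ → ℝ) : Prop where
  continuousOn : ContinuousOn ψ (Ici 0)
  mem_Icc : ∀ z : ℝ, 0 ≤ z → ψ z ∈ Icc (0 : ℝ) 1
  map_zero : ψ 0 = 1
  tendsto_atTop : Tendsto ψ atTop (𝓝 0)
  antitoneOn : AntitoneOn ψ (Ici 0)
  strictAnti : ∀ ⦃x y : ℝ⦄, 0 ≤ x → x < y → ENNReal.ofReal y ≤ pseudoInv ψ 0 → ψ y < ψ x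

/-- The left-hand derivative `D⁻f`. -/
def leftDeriv (f : ℝ → ℝ) (z : ℝ) : ℝ := derivWithin f (Iio z) z

/-- The right-hand derivative `D⁺f`. -/
def rightDeriv (f : ℝ → ℝ) (z : ℝ) : ℝ := derivWithin f (Ioi z) z

/-- A `d`-monotone Archimedean generator: the derivatives `ψ⁽ᵏ⁾` exist on `(0,∞)` for
`k = 1,…,d-2`, and `(-1)^(d-2) · ψ^(d-2)` is non-negative, non-increasing and convex
on `(0,∞)`. -/
structure IsdMonotoneGenerator (d : ℕ) (ψ : ℝ → ℝ) : Prop where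
  toIsGenerator : IsGenerator ψ
  differentiable : ∀ k : ℕ, k < d - 2 → ∀ z : ℝ, 0 < z → DifferentiableAt ℝ (deriv^[k] ψ) z
  nonneg : ∀ z : ℝ, 0 < z → 0 ≤ (-1 : ℝ) ^ (d - 2) * deriv^[d - 2] ψ z
  antitoneOn : AntitoneOn (fun z => (-1 : ℝ) ^ (d - 2) * deriv^[d - 2] ψ z) (Ioi 0)
  convexOn : ConvexOn ℝ (Ioi 0) (fun z => (-1 : ℝ) ^ (d - 2) * deriv^[d - 2] ψ z)

/-- The `d`-dimensional Archimedean copula generated by `ψ`: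
`C_ψ(x) = ψ(φ(x₁) + ⋯ + φ(x_d))` (with `ψ(∞) := 0`). -/
def archCopula (d : ℕ) (ψ : ℝ → ℝ) (x : Fin d → ℝ) : ℝ :=
  psiExt ψ (∑ i, pseudoInv ψ (x i))

/-- A generator is strict if `ψ(z) > 0` for all `z ≥ 0`. -/
def IsStrictGenerator (ψ : ℝ → ℝ) : Prop := ∀ z : ℝ, 0 ≤ z → 0 < ψ z

/-- The level set `L_t = {x ∈ [0,1]^d : C_ψ(x) = t}`. -/
def levelSet (d : ℕ) (ψ : ℝ → ℝ) (t : ℝ) : Set (Fin d → ℝ) :=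
  {x | (∀ i, x i ∈ Icc (0 : ℝ) 1) ∧ archCopula d ψ x = t}

/-- The Williamson transform `(W_d γ)(z) = ∫ (1 - tz)₊^(d-1) dγ(t)`. -/
def williamson (d : ℕ) (γ : Measure ℝ) (z : ℝ) : ℝ :=
  ∫ t, max (1 - t * z) 0 ^ (d - 1) ∂γ

/-- The class `P_{W_d}`: Borel probability measures on `[0,∞)` with `γ({0}) = 0` and
`∫_{[0,1]} (1-t)^(d-1) dγ(t) = 1/2`. -/
def memPW (d : ℕ) (γ : Measure ℝ) : Prop :=
  IsProbabilityMeasure γ ∧ γ (Iio 0) = 0 ∧ γ {0} = 0 ∧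
    ∫ t in Icc (0 : ℝ) 1, (1 - t) ^ (d - 1) ∂γ = 1 / 2

/-! ### The simplex distribution -/

open scoped Pointwise in
/-- There is a probability measure on the standard simplex (its uniform distribution) whose
joint survival function is `z ↦ (1 - ∑ zᵢ)₊ⁿ`. It is realised as the normalised Lebesgue measure
on the corner `{u ≥ 0, ∑ uᵢ ≤ 1}` of `ℝⁿ`, with the slack `1 - ∑ uᵢ` as additional coordinate;
the survival function is the volume of a translated and rescaled corner. -/
lemma exists_simplex_law (n : ℕ) (hn : n ≠ 0) :
    ∃ σ : Measure (Fin (n + 1) → ℝ), IsProbabilityMeasure σ ∧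
      (∀ᵐ s ∂σ, (∀ i, 0 ≤ s i) ∧ ∑ i, s i = 1) ∧
      ∀ z : Fin (n + 1) → ℝ, (∀ i, 0 ≤ z i) →
        σ {s | ∀ i, z i ≤ s i} = ENNReal.ofReal (max (1 - ∑ i, z i) 0 ^ n) := by
  set K : Set (Fin n → ℝ) := {u | (∀ i, 0 ≤ u i) ∧ ∑ i, u i ≤ 1} with hK
  have hKm : MeasurableSet K := by
    have h1 : IsClosed K := by
      rw [hK, Set.ofPred_and, Set.ofPred_forall]
      exact (isClosed_iInter fun i => isClosed_le continuous_const (continuous_apply i)).inter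
        (isClosed_le (by fun_prop) continuous_const)
    exact h1.measurableSet
  have hKfin : volume K ≠ ∞ := by
    have : K ⊆ Icc 0 1 := fun u hu => ⟨fun i => hu.1 i, fun i =>
      (Finset.single_le_sum (fun j _ => hu.1 j) (Finset.mem_univ i)).trans hu.2⟩
    exact ((measure_mono this).trans_lt isCompact_Icc.measure_lt_top).ne
  have hn' : (0 : ℝ) < n := by exact_mod_cast Nat.pos_of_ne_zero hn
  have hKpos : volume K ≠ 0 := by
    have hsub : (univ.pi fun _ : Fin n => Ioo (0 : ℝ) (1 / n)) ⊆ K := by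
      intro u hu
      refine ⟨fun i => (hu i (mem_univ i)).1.le, ?_⟩
      calc ∑ i, u i ≤ ∑ _i : Fin n, (1 / n : ℝ) :=
            Finset.sum_le_sum fun i _ => (hu i (mem_univ i)).2.le
        _ = 1 := by simp [hn'.ne']
    have hpos : 0 < volume (univ.pi fun _ : Fin n => Ioo (0 : ℝ) (1 / n)) := by
      refine (isOpen_set_pi finite_univ fun _ _ => isOpen_Ioo).measure_pos _ ⟨fun _ => 1 / (2 * n), ?_⟩
      intro i _
      refine ⟨by positivity, ?_⟩
      rw [div_lt_div_iff₀ (by positivity) hn']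
      linarith
    exact (hpos.trans_le (measure_mono hsub)).ne'
  set J : (Fin n → ℝ) → (Fin (n + 1) → ℝ) := fun u => Fin.cons (1 - ∑ i, u i) u with hJ
  have hJm : Measurable J := by
    rw [measurable_pi_iff]
    intro i
    refine Fin.cases ?_ (fun j => ?_) i
    · simp only [hJ, Fin.cons_zero]; fun_prop
    · simp only [hJ, Fin.cons_succ]; fun_prop
  have hcond : IsProbabilityMeasure (ProbabilityTheory.cond volume K) :=
    ProbabilityTheory.cond_isProbabilityMeasure_of_finite hKpos hKfin
  refine ⟨(ProbabilityTheory.cond volume K).map J,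
    Measure.isProbabilityMeasure_map hJm.aemeasurable, ?_, ?_⟩
  · have hms : MeasurableSet {s : Fin (n + 1) → ℝ | (∀ i, 0 ≤ s i) ∧ ∑ i, s i = 1} := by
      have h1 : IsClosed {s : Fin (n + 1) → ℝ | (∀ i, 0 ≤ s i) ∧ ∑ i, s i = 1} := by
        rw [Set.ofPred_and, Set.ofPred_forall]
        exact (isClosed_iInter fun i => isClosed_le continuous_const (continuous_apply i)).inter
          (isClosed_eq (by fun_prop) continuous_const)
      exact h1.measurableSet
    rw [ae_map_iff hJm.aemeasurable hms]
    filter_upwards [ProbabilityTheory.ae_cond_mem hKm] with u hu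
    refine ⟨fun i => ?_, ?_⟩
    · refine Fin.cases ?_ (fun j => ?_) i
      · simpa [hJ] using hu.2
      · simpa [hJ] using hu.1 j
    · simp [hJ, Fin.sum_univ_succ]
  · intro z hz
    have hms : MeasurableSet {s : Fin (n + 1) → ℝ | ∀ i, z i ≤ s i} := by
      rw [Set.ofPred_forall]
      exact MeasurableSet.iInter fun i => measurableSet_le measurable_const (measurable_pi_apply i)
    rw [Measure.map_apply hJm hms, ProbabilityTheory.cond_apply hKm]
    set a : ℝ := 1 - ∑ i, z i with ha
    have hset : K ∩ J ⁻¹' {s | ∀ i, z i ≤ s i} =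
        {u | (∀ i : Fin n, z i.succ ≤ u i) ∧ ∑ i, u i ≤ 1 - z 0} := by
      ext u
      simp only [hK, hJ, mem_inter_iff, mem_ofPred_eq, mem_preimage, Fin.forall_fin_succ,
        Fin.cons_zero, Fin.cons_succ]
      constructor
      · rintro ⟨_, h1, h2⟩
        exact ⟨h2, by linarith⟩
      · rintro ⟨h1, h2⟩
        exact ⟨⟨fun i => (hz _).trans (h1 i), by linarith [hz 0]⟩, by linarith, h1⟩
    have ha' : a = 1 - z 0 - ∑ i : Fin n, z i.succ := by
      rw [ha, Fin.sum_univ_succ]; ring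
    rw [hset]
    rcases le_or_gt a 0 with h0 | h0
    · -- the translated corner degenerates to at most one point
      have hsub : {u : Fin n → ℝ | (∀ i : Fin n, z i.succ ≤ u i) ∧ ∑ i, u i ≤ 1 - z 0} ⊆
          {fun i => z i.succ} := by
        rintro u ⟨h1, h2⟩
        have h3 : ∑ i : Fin n, z i.succ = ∑ i, u i :=
          le_antisymm (Finset.sum_le_sum fun i _ => h1 i) (by linarith)
        have h4 := (Finset.sum_eq_sum_iff_of_le (fun i _ => h1 i)).1 h3
        funext i
        exact (h4 i (Finset.mem_univ i)).symm
      have : NeZero n := ⟨hn⟩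
      have h5 : volume {u : Fin n → ℝ | (∀ i : Fin n, z i.succ ≤ u i) ∧ ∑ i, u i ≤ 1 - z 0} = 0 :=
        measure_mono_null hsub (measure_singleton _)
      rw [h5, max_eq_right h0, zero_pow hn]
      simp
    · have hset2 : {u : Fin n → ℝ | (∀ i : Fin n, z i.succ ≤ u i) ∧ ∑ i, u i ≤ 1 - z 0} =
          (fun u => u + (fun i => - z (Fin.succ i))) ⁻¹' (a • K) := by
        ext u
        rw [mem_preimage, mem_smul_set_iff_inv_smul_mem₀ h0.ne']
        simp only [hK, mem_ofPred_eq, Pi.smul_apply, Pi.add_apply, smul_eq_mul, ← Finset.mul_sum,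
          Finset.sum_add_distrib, Finset.sum_neg_distrib]
        refine and_congr (forall_congr' fun i => ?_) ?_
        · rw [mul_nonneg_iff_of_pos_left (inv_pos.2 h0)]
          constructor <;> intro h <;> linarith
        · rw [inv_mul_le_iff₀ h0]
          constructor <;> intro h <;> linarith
      rw [hset2, measure_preimage_add_right, Measure.addHaar_smul, max_eq_left h0.le,
        Module.finrank_fin_fun, abs_of_pos (pow_pos h0 n), mul_comm (ENNReal.ofReal _), ← mul_assoc,
        ENNReal.inv_mul_cancel hKpos hKfin, one_mul]

/-! ### The Williamson transform as a generator -/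

/-- The properties of a generator used here: continuity and antitonicity on `[0,∞)`,
non-negativity, `ψ 0 = 1`, and strict decrease as long as `ψ` is positive. -/
structure IsBasicGenerator (ψ : ℝ → ℝ) : Prop where
  continuousOn : ContinuousOn ψ (Ici 0)
  antitoneOn : AntitoneOn ψ (Ici 0)
  nonneg : ∀ z, 0 ≤ z → 0 ≤ ψ z
  map_zero : ψ 0 = 1
  strict : ∀ z w, 0 ≤ z → z < w → 0 < ψ z → ψ w < ψ z

section Williamson

variable {n : ℕ} {γ : Measure ℝ}

lemma kernel_mem_Icc {t z : ℝ} (ht : 0 ≤ t) (hz : 0 ≤ z) :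
    max (1 - t * z) 0 ^ n ∈ Icc (0 : ℝ) 1 := by
  have h := mul_nonneg ht hz
  exact ⟨by positivity, pow_le_one₀ (le_max_right _ _) (max_le (by linarith) zero_le_one)⟩

lemma integrable_kernel [IsProbabilityMeasure γ] (h0 : ∀ᵐ t ∂γ, 0 ≤ t) {z : ℝ} (hz : 0 ≤ z) :
    Integrable (fun t => max (1 - t * z) 0 ^ n) γ := by
  refine Integrable.of_bound (C := 1) (by fun_prop) ?_
  filter_upwards [h0] with t ht
  have := kernel_mem_Icc (n := n) ht hz
  rw [Real.norm_eq_abs, abs_of_nonneg this.1]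
  exact this.2

lemma kernel_antitone {t z w : ℝ} (ht : 0 ≤ t) (h : z ≤ w) :
    max (1 - t * w) 0 ^ n ≤ max (1 - t * z) 0 ^ n := by
  have := mul_le_mul_of_nonneg_left h ht
  exact pow_le_pow_left₀ (le_max_right _ _) (max_le_max (by linarith) le_rfl) n

lemma williamson_isBasicGenerator [IsProbabilityMeasure γ] (hn : n ≠ 0)
    (hpos : ∀ᵐ t ∂γ, 0 < t) : IsBasicGenerator (williamson (n + 1) γ) := by
  have h0 : ∀ᵐ t ∂γ, 0 ≤ t := hpos.mono fun t ht => ht.le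
  have hanti : AntitoneOn (williamson (n + 1) γ) (Ici 0) := by
    intro z hz w hw h
    simp only [williamson, Nat.add_sub_cancel]
    refine integral_mono_ae (integrable_kernel h0 hw) (integrable_kernel h0 hz) ?_
    filter_upwards [h0] with t ht using kernel_antitone ht h
  refine ⟨?_, hanti, ?_, ?_, ?_⟩
  · have hc : Continuous fun z => ∫ t, max (1 - t * max z 0) 0 ^ n ∂γ := by
      refine continuous_of_dominated (bound := fun _ => 1) (fun z => by fun_prop) (fun z => ?_)
        (integrable_const _) (ae_of_all _ fun t => by fun_prop)
      filter_upwards [h0] with t ht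
      have := kernel_mem_Icc (n := n) ht (le_max_right z 0)
      rw [Real.norm_eq_abs, abs_of_nonneg this.1]
      exact this.2
    refine hc.continuousOn.congr fun z hz => ?_
    simp only [williamson, Nat.add_sub_cancel, max_eq_left (mem_Ici.1 hz)]
  · intro z _
    simp only [williamson, Nat.add_sub_cancel]
    exact integral_nonneg fun t => by positivity
  · simp [williamson]
  · intro z w hz hzw hψ
    refine lt_of_le_of_ne (hanti hz (hz.trans hzw.le : (0 : ℝ) ≤ w) hzw.le) fun heq => ?_
    simp only [williamson, Nat.add_sub_cancel] at heq hψ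
    have hi := (integral_eq_iff_of_ae_le (integrable_kernel (n := n) h0 (hz.trans hzw.le))
      (integrable_kernel (n := n) h0 hz)
      (by filter_upwards [h0] with t ht using kernel_antitone ht hzw.le)).1 heq
    -- equality of the kernels at `z < w` forces both of them to vanish
    have hz0 : (fun t => max (1 - t * z) 0 ^ n) =ᵐ[γ] 0 := by
      filter_upwards [hi, hpos] with t ht htpos
      by_contra hne
      have h1 : 0 < 1 - t * z := by
        by_contra hle
        rw [Pi.zero_apply, max_eq_right (not_lt.1 hle), zero_pow hn] at hne
        exact hne rfl
      have h2 : t * z < t * w := mul_lt_mul_of_pos_left hzw htpos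
      have h3 : max (1 - t * w) 0 ^ n < max (1 - t * z) 0 ^ n :=
        pow_lt_pow_left₀ (max_lt (by rw [max_eq_left h1.le]; linarith) (by positivity))
          (le_max_right _ _) hn
      exact h3.ne ht
    rw [integral_congr_ae hz0] at hψ
    simp at hψ

/-- Away from the origin the Williamson transform is Lipschitz: the kernel `(1 - tz)₊ⁿ` vanishes
for `z ≥ ε` and `t > 1/ε`, so that its slope in `z` is at most `n/ε`. -/
lemma williamson_lipschitzOnWith [IsProbabilityMeasure γ] (hn : n ≠ 0)
    (hpos : ∀ᵐ t ∂γ, 0 < t) {ε : ℝ} (hε : 0 < ε) :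
    ∃ L : ℝ≥0, LipschitzOnWith L (williamson (n + 1) γ) (Ici ε) := by
  have h0 : ∀ᵐ t ∂γ, 0 ≤ t := hpos.mono fun t ht => ht.le
  refine ⟨(n / ε : ℝ).toNNReal, LipschitzOnWith.of_dist_le_mul fun z hz w hw => ?_⟩
  have hz0 : 0 ≤ z := hε.le.trans hz
  have hw0 : 0 ≤ w := hε.le.trans hw
  rw [Real.coe_toNNReal _ (by positivity), Real.dist_eq, Real.dist_eq]
  simp only [williamson, Nat.add_sub_cancel]
  rw [← integral_sub (integrable_kernel h0 hz0) (integrable_kernel h0 hw0)]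
  have key : ∀ᵐ t ∂γ, ‖max (1 - t * z) 0 ^ n - max (1 - t * w) 0 ^ n‖ ≤ n / ε * |z - w| := by
    filter_upwards [h0] with t ht
    rw [Real.norm_eq_abs]
    rcases le_or_gt (t * ε) 1 with h | h
    · have hb : ∀ v, 0 ≤ v → |max (1 - t * v) 0| ≤ 1 := fun v hv => by
        rw [abs_of_nonneg (le_max_right _ _)]
        exact max_le (by linarith [mul_nonneg ht hv]) zero_le_one
      have hd : |max (1 - t * z) 0 - max (1 - t * w) 0| ≤ 1 / ε * |z - w| := by
        refine (abs_max_sub_max_le_abs _ _ _).trans ?_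
        have : 1 - t * z - (1 - t * w) = t * (w - z) := by ring
        rw [this, abs_mul, abs_of_nonneg ht, abs_sub_comm w z]
        exact mul_le_mul_of_nonneg_right ((le_div_iff₀ hε).2 h) (abs_nonneg _)
      calc _ ≤ _ := abs_pow_sub_pow_le _ _ n
        _ ≤ (1 / ε * |z - w|) * n * 1 := by
            refine mul_le_mul (mul_le_mul_of_nonneg_right hd (by positivity)) ?_
              (by positivity) (by positivity)
            exact pow_le_one₀ (by positivity) (max_le (hb z hz0) (hb w hw0))
        _ = n / ε * |z - w| := by ring
    · have hv : ∀ v, ε ≤ v → max (1 - t * v) 0 = 0 := fun v hv => by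
        have := mul_le_mul_of_nonneg_left hv ht
        exact max_eq_right (by linarith)
      rw [hv z hz, hv w hw, sub_self, abs_zero]
      positivity
  have := norm_integral_le_of_norm_le_const key
  simpa using this

/-- If `ψ(1/r) = 0` then `γ` gives no mass to `(-∞, r)`. -/
lemma measure_Iio_of_williamson_eq_zero [IsProbabilityMeasure γ]
    (hpos : ∀ᵐ t ∂γ, 0 < t) {r : ℝ} (hr : 0 < r) (h : williamson (n + 1) γ r⁻¹ = 0) :
    γ (Iio r) = 0 := by
  have h0 : ∀ᵐ t ∂γ, 0 ≤ t := hpos.mono fun t ht => ht.le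
  simp only [williamson, Nat.add_sub_cancel] at h
  rw [integral_eq_zero_iff_of_nonneg_ae (ae_of_all _ fun t => by positivity)
    (integrable_kernel h0 (by positivity))] at h
  rw [measure_eq_zero_iff_ae_notMem]
  filter_upwards [h] with t ht hlt
  have h1 : t * r⁻¹ < 1 := by
    rw [← div_eq_mul_inv, div_lt_one hr]; exact hlt
  have : 0 < max (1 - t * r⁻¹) 0 ^ n := pow_pos (lt_max_of_lt_left (by linarith)) n
  exact this.ne' ht

end Williamson

/-! ### The pseudo-inverse -/

namespace IsBasicGenerator

variable {ψ : ℝ → ℝ}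

lemma le_one (h : IsBasicGenerator ψ) {z : ℝ} (hz : 0 ≤ z) : ψ z ≤ 1 := by
  rw [← h.map_zero]
  exact h.antitoneOn (mem_Ici.2 le_rfl) hz hz

lemma pseudoInv_le_iff (h : IsBasicGenerator ψ) {y z : ℝ} (hy : y ∈ Icc (0 : ℝ) 1) (hz : 0 ≤ z) :
    pseudoInv ψ y ≤ ENNReal.ofReal z ↔ ψ z ≤ y := by
  constructor
  · intro hle
    by_contra! hlt
    -- by continuity `ψ` stays above `y` slightly to the right of `z`
    obtain ⟨w, hzw, hw⟩ : ∃ w, z < w ∧ y < ψ w := by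
      have hc : Tendsto ψ (𝓝[>] z) (𝓝 (ψ z)) :=
        (h.continuousOn z hz).mono_left (nhdsWithin_mono z fun w hw => hz.trans (le_of_lt hw))
      obtain ⟨w, hw1, hw2⟩ := ((hc.eventually_const_lt hlt).and self_mem_nhdsWithin).exists
      exact ⟨w, hw2, hw1⟩
    have hge : ENNReal.ofReal w ≤ pseudoInv ψ y := by
      refine le_sInf fun v hv => ?_
      by_contra! hvw
      have hv' : v ≠ ∞ := hvw.ne_top
      simp only [mem_ofPred_eq, psiExt, hv', if_false] at hv
      have h1 : v.toReal ≤ w := ENNReal.toReal_le_of_le_ofReal (hz.trans hzw.le) hvw.le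
      have h2 := h.antitoneOn (mem_Ici.2 ENNReal.toReal_nonneg) (mem_Ici.2 (hz.trans hzw.le)) h1
      linarith
    exact (((ENNReal.ofReal_lt_ofReal_iff (hz.trans_lt hzw)).2 hzw).trans_le hge).not_ge hle
  · intro hle
    obtain ⟨w, hw, hwy⟩ := intermediate_value_Icc' hz (h.continuousOn.mono Icc_subset_Ici_self)
      (⟨hle, by rw [h.map_zero]; exact hy.2⟩ : y ∈ Icc (ψ z) (ψ 0))
    refine le_trans (sInf_le ?_) (ENNReal.ofReal_le_ofReal hw.2)
    simp [psiExt, ENNReal.toReal_ofReal hw.1, hwy]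

lemma pseudoInv_apply (h : IsBasicGenerator ψ) {z : ℝ} (hz : 0 ≤ z) (hψ : 0 < ψ z) :
    pseudoInv ψ (ψ z) = ENNReal.ofReal z := by
  have hy : ψ z ∈ Icc (0 : ℝ) 1 := ⟨hψ.le, h.le_one hz⟩
  have hle := (h.pseudoInv_le_iff hy hz).2 le_rfl
  refine le_antisymm hle ?_
  by_contra! hlt
  have hfin : ENNReal.ofReal (pseudoInv ψ (ψ z)).toReal = pseudoInv ψ (ψ z) :=
    ENNReal.ofReal_toReal hlt.ne_top
  have h1 := (h.pseudoInv_le_iff hy ENNReal.toReal_nonneg).1 hfin.ge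
  have h2 : (pseudoInv ψ (ψ z)).toReal < z := by
    rw [← hfin] at hlt
    exact (ENNReal.ofReal_lt_ofReal_iff_of_nonneg ENNReal.toReal_nonneg).1 hlt
  have h3 := h.antitoneOn (mem_Ici.2 ENNReal.toReal_nonneg) hz h2.le
  have h4 := h.strict _ _ ENNReal.toReal_nonneg h2 (hψ.trans_le h3)
  linarith

lemma pseudoInv_one (h : IsBasicGenerator ψ) : pseudoInv ψ 1 = 0 := by
  have := h.pseudoInv_apply le_rfl (by rw [h.map_zero]; exact one_pos)
  simpa [h.map_zero] using this

lemma psiExt_pseudoInv_zero (h : IsBasicGenerator ψ) : psiExt ψ (pseudoInv ψ 0) = 0 := by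
  unfold psiExt
  split_ifs with hi
  · rfl
  · have h1 := (h.pseudoInv_le_iff (by simp : (0 : ℝ) ∈ Icc (0 : ℝ) 1) ENNReal.toReal_nonneg).1
      (ENNReal.ofReal_toReal hi).ge
    exact le_antisymm h1 (h.nonneg _ ENNReal.toReal_nonneg)

/-- A positive value with finite pseudo-inverse is attained there. -/
lemma apply_toReal_pseudoInv (h : IsBasicGenerator ψ) {y : ℝ} (hy : 0 < y)
    (hfin : pseudoInv ψ y ≠ ∞) : ψ (pseudoInv ψ y).toReal = y := by
  obtain ⟨w, hw⟩ : {z : ℝ≥0∞ | psiExt ψ z = y}.Nonempty := by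
    by_contra! hemp
    exact hfin (by rw [pseudoInv, hemp, sInf_empty])
  rw [mem_ofPred_eq, psiExt] at hw
  split_ifs at hw with hi
  · exact absurd hw hy.ne
  · have := h.pseudoInv_apply ENNReal.toReal_nonneg (by rw [hw]; exact hy)
    rw [hw] at this
    rw [this, ENNReal.toReal_ofReal ENNReal.toReal_nonneg, hw]

lemma antitoneOn_pseudoInv (h : IsBasicGenerator ψ) : AntitoneOn (pseudoInv ψ) (Icc 0 1) := by
  intro x hx y hy hxy
  by_contra! hlt
  have hfin : ENNReal.ofReal (pseudoInv ψ x).toReal = pseudoInv ψ x :=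
    ENNReal.ofReal_toReal hlt.ne_top
  have h1 := (h.pseudoInv_le_iff hx ENNReal.toReal_nonneg).1 hfin.ge
  have h2 := (h.pseudoInv_le_iff hy ENNReal.toReal_nonneg).2 (h1.trans hxy)
  exact (hlt.trans_le (h2.trans hfin.le)).false

/-- Clamping the argument to `[0,1]`, the range where `φ` is antitone, makes `φ` antitone on `ℝ`. -/
lemma measurable_pseudoInv_clamp (h : IsBasicGenerator ψ) :
    Measurable fun y : ℝ => pseudoInv ψ (max 0 (min y 1)) := by
  refine Antitone.measurable fun x y hxy => h.antitoneOn_pseudoInv ?_ ?_ ?_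
  · exact ⟨le_max_left _ _, max_le zero_le_one (min_le_right _ _)⟩
  · exact ⟨le_max_left _ _, max_le zero_le_one (min_le_right _ _)⟩
  · exact max_le_max le_rfl (min_le_min hxy le_rfl)

lemma measurable_psiExt (h : IsBasicGenerator ψ) : Measurable (psiExt ψ) := by
  refine Antitone.measurable fun x y hxy => ?_
  unfold psiExt
  split_ifs with hy hx hx
  · exact le_rfl
  · exact h.nonneg _ ENNReal.toReal_nonneg
  · exact absurd (top_le_iff.1 (hx ▸ hxy)) hy
  · exact h.antitoneOn (mem_Ici.2 ENNReal.toReal_nonneg) (mem_Ici.2 ENNReal.toReal_nonneg)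
      (ENNReal.toReal_mono hy hxy)

lemma measurableSet_levelSet (h : IsBasicGenerator ψ) (d : ℕ) (t : ℝ) :
    MeasurableSet (levelSet d ψ t) := by
  have hset : levelSet d ψ t = (Icc 0 1 : Set (Fin d → ℝ)) ∩
      {x | psiExt ψ (∑ i, pseudoInv ψ (max 0 (min (x i) 1))) = t} := by
    ext x
    simp only [levelSet, archCopula, mem_ofPred_eq, mem_inter_iff]
    have hx : (∀ i, x i ∈ Icc (0 : ℝ) 1) ↔ x ∈ (Icc 0 1 : Set (Fin d → ℝ)) :=
      ⟨fun H => ⟨fun i => (H i).1, fun i => (H i).2⟩, fun H i => ⟨H.1 i, H.2 i⟩⟩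
    rw [← hx]
    refine and_congr_right fun H => ?_
    have : ∀ i, max 0 (min (x i) 1) = x i := fun i => by
      rw [min_eq_left (H i).2, max_eq_right (H i).1]
    simp only [this]
  rw [hset]
  refine measurableSet_Icc.inter (measurableSet_eq_fun ?_ measurable_const)
  exact h.measurable_psiExt.comp (Finset.measurable_sum _ fun i _ =>
    h.measurable_pseudoInv_clamp.comp (measurable_pi_apply i))

end IsBasicGenerator

/-! ### The stochastic representation -/

/-- The map `(t, s) ↦ (ψ(s₁/t), …, ψ(s_d/t))`. The argument of `ψ` is clamped to `[0,∞)`, where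
alone `ψ` is well behaved. -/
def repMap (d : ℕ) (ψ : ℝ → ℝ) (p : ℝ × (Fin d → ℝ)) : Fin d → ℝ :=
  fun i => ψ (max (p.2 i * p.1⁻¹) 0)

lemma IsBasicGenerator.measurable_repMap {ψ : ℝ → ℝ} (h : IsBasicGenerator ψ) (d : ℕ) :
    Measurable (repMap d ψ) := by
  have hm : Measurable fun z => ψ (max z 0) := Antitone.measurable fun x y hxy =>
    h.antitoneOn (mem_Ici.2 (le_max_right _ _)) (mem_Ici.2 (le_max_right _ _)) (max_le_max hxy le_rfl)
  rw [measurable_pi_iff]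
  intro i
  exact hm.comp (by fun_prop)

/-- The distribution function of the representing vector on `[0,1]^d` is the Archimedean copula:
given `t`, the event is `{∀ i, t φ(xᵢ) ≤ sᵢ}`, of probability `(1 - t ∑ φ(xᵢ))₊ⁿ`. -/
lemma prod_repMap_le {n : ℕ} (hn : n ≠ 0) {γ : Measure ℝ} [IsProbabilityMeasure γ]
    (hpos : ∀ᵐ t ∂γ, 0 < t) {σ : Measure (Fin (n + 1) → ℝ)} [IsProbabilityMeasure σ]
    (hσ : ∀ᵐ s ∂σ, (∀ i, 0 ≤ s i) ∧ ∑ i, s i = 1)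
    (hσ' : ∀ z : Fin (n + 1) → ℝ, (∀ i, 0 ≤ z i) →
        σ {s | ∀ i, z i ≤ s i} = ENNReal.ofReal (max (1 - ∑ i, z i) 0 ^ n))
    (x : Fin (n + 1) → ℝ) (hx : ∀ i, x i ∈ Icc (0 : ℝ) 1) :
    (γ.prod σ) {p | ∀ i, repMap (n + 1) (williamson (n + 1) γ) p i ≤ x i} =
      ENNReal.ofReal (archCopula (n + 1) (williamson (n + 1) γ) x) := by
  have h := williamson_isBasicGenerator hn hpos
  set ψ := williamson (n + 1) γ with hψ
  have hFm := h.measurable_repMap (n + 1)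
  have hms : MeasurableSet {p : ℝ × (Fin (n + 1) → ℝ) | ∀ i, repMap (n + 1) ψ p i ≤ x i} := by
    rw [ofPred_forall]
    exact MeasurableSet.iInter fun i =>
      measurableSet_le ((measurable_pi_apply i).comp hFm) measurable_const
  rw [Measure.prod_apply hms]
  have hsec : ∀ t : ℝ, 0 < t →
      σ (Prod.mk t ⁻¹' {p : ℝ × (Fin (n + 1) → ℝ) | ∀ i, repMap (n + 1) ψ p i ≤ x i}) =
      σ {s | ∀ i, pseudoInv ψ (x i) ≤ ENNReal.ofReal (s i * t⁻¹)} := by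
    intro t ht
    refine measure_congr ?_
    filter_upwards [hσ] with s hs
    refine propext (forall_congr' fun i => ?_)
    have h1 : 0 ≤ s i * t⁻¹ := mul_nonneg (hs.1 i) (by positivity)
    rw [h.pseudoInv_le_iff (hx i) h1]
    simp only [repMap, max_eq_left h1]
  by_cases hfin : ∀ i, pseudoInv ψ (x i) ≠ ∞
  · set z : Fin (n + 1) → ℝ := fun i => (pseudoInv ψ (x i)).toReal with hz
    have hz0 : ∀ i, 0 ≤ z i := fun i => ENNReal.toReal_nonneg
    have hC : archCopula (n + 1) ψ x = ψ (∑ i, z i) := by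
      rw [archCopula, psiExt, if_neg (ENNReal.sum_ne_top.2 fun i _ => hfin i),
        ENNReal.toReal_sum fun i _ => hfin i]
    rw [hC, hψ, williamson, Nat.add_sub_cancel, ofReal_integral_eq_lintegral_ofReal
      (integrable_kernel (hpos.mono fun t ht => ht.le) (Finset.sum_nonneg fun i _ => hz0 i))
      (ae_of_all _ fun t => by positivity)]
    refine lintegral_congr_ae ?_
    filter_upwards [hpos] with t ht
    rw [hsec t ht]
    have hset : {s : Fin (n + 1) → ℝ | ∀ i, pseudoInv ψ (x i) ≤ ENNReal.ofReal (s i * t⁻¹)} =ᵐ[σ]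
        {s | ∀ i, t * z i ≤ s i} := by
      filter_upwards [hσ] with s hs
      refine propext (forall_congr' fun i => ?_)
      have h1 : 0 ≤ s i * t⁻¹ := mul_nonneg (hs.1 i) (by positivity)
      rw [← ENNReal.ofReal_toReal (hfin i), ENNReal.ofReal_le_ofReal_iff h1, ← div_eq_mul_inv,
        le_div_iff₀ ht, mul_comm]
    rw [measure_congr hset, hσ' _ fun i => mul_nonneg ht.le (hz0 i), Finset.mul_sum]
  · push Not at hfin
    obtain ⟨i, hi⟩ := hfin
    have hC : archCopula (n + 1) ψ x = 0 := by
      rw [archCopula, psiExt, if_pos]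
      exact ENNReal.sum_eq_top.2 ⟨i, Finset.mem_univ i, hi⟩
    rw [hC, ENNReal.ofReal_zero, lintegral_eq_zero_iff' (measurable_measure_prodMk_left hms).aemeasurable]
    filter_upwards [hpos] with t ht
    rw [hsec t ht]
    have : {s : Fin (n + 1) → ℝ | ∀ i, pseudoInv ψ (x i) ≤ ENNReal.ofReal (s i * t⁻¹)} = ∅ := by
      refine eq_empty_of_forall_notMem fun s hs => ?_
      have := hs i
      rw [hi, top_le_iff] at this
      exact ENNReal.ofReal_ne_top this
    rw [this, measure_empty, Pi.zero_apply]

/-- Two probability measures concentrated on `[0,1]^d` with the same values on the boxes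
`[0,x₁] × ⋯ × [0,x_d]`, `x ∈ [0,1]^d`, coincide. -/
lemma ext_of_unit_boxes {d : ℕ} {μ ν : Measure (Fin d → ℝ)} [IsProbabilityMeasure μ]
    [IsProbabilityMeasure ν] (h1 : ∀ᵐ x ∂μ, ∀ i, x i ∈ Icc (0 : ℝ) 1)
    (h2 : ∀ᵐ x ∂ν, ∀ i, x i ∈ Icc (0 : ℝ) 1)
    (h : ∀ x : Fin d → ℝ, (∀ i, x i ∈ Icc (0 : ℝ) 1) →
      μ {y | ∀ i, y i ≤ x i} = ν {y | ∀ i, y i ≤ x i}) : μ = ν := by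
  have hpi : MeasurableSpace.generateFrom
      (univ.pi '' univ.pi fun _ : Fin d => range (Iic : ℝ → Set ℝ)) = MeasurableSpace.pi := by
    refine generateFrom_eq_pi (fun i => ?_) fun i => ?_
    · rw [← borel_eq_generateFrom_Iic]
      exact (BorelSpace.measurable_eq (α := ℝ)).symm
    · refine ⟨fun k : ℕ => Iic (k : ℝ), fun k => mem_range_self _, ?_⟩
      exact iUnion_eq_univ_iff.2 fun y => (exists_nat_ge y).imp fun k hk => hk
  refine ext_of_generate_finite _ hpi.symm (IsPiSystem.pi fun _ => isPiSystem_Iic) ?_ (by simp)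
  rintro _ ⟨A, hA, rfl⟩
  choose x hx using fun i => hA i (mem_univ i)
  have hA' : univ.pi A = {y | ∀ i, y i ≤ x i} := by
    ext y
    simp [← hx]
  rw [hA']
  by_cases hneg : ∃ i, x i < 0
  · obtain ⟨i, hi⟩ := hneg
    have key : ∀ ρ : Measure (Fin d → ℝ), (∀ᵐ y ∂ρ, ∀ i, y i ∈ Icc (0 : ℝ) 1) →
        ρ {y | ∀ i, y i ≤ x i} = 0 := fun ρ hρ => by
      rw [measure_eq_zero_iff_ae_notMem]
      filter_upwards [hρ] with y hy hyx
      exact absurd ((hy i).1.trans (hyx i)) (not_le.2 hi)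
    rw [key μ h1, key ν h2]
  · push Not at hneg
    have key : ∀ ρ : Measure (Fin d → ℝ), (∀ᵐ y ∂ρ, ∀ i, y i ∈ Icc (0 : ℝ) 1) →
        ρ {y | ∀ i, y i ≤ x i} = ρ {y | ∀ i, y i ≤ min (x i) 1} := fun ρ hρ => by
      refine measure_congr ?_
      filter_upwards [hρ] with y hy
      exact propext (forall_congr' fun i => ⟨fun hh => le_min hh (hy i).2,
        fun hh => hh.trans (min_le_left _ _)⟩)
    rw [key μ h1, key ν h2]
    exact h _ fun i => ⟨le_min (hneg i) zero_le_one, min_le_right _ _⟩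

/-- The copula measure is the law of `(ψ(S₁/T), …, ψ(S_d/T))` with `T ∼ γ` and `S` uniform on the
simplex independent of `T`; moreover the copula evaluated along this vector is `ψ(1/T)`, because
`∑ φ(ψ(Sᵢ/T)) = ∑ Sᵢ/T = 1/T` almost surely. -/
lemma exists_representation {n : ℕ} (hn : n ≠ 0) {γ : Measure ℝ} [IsProbabilityMeasure γ]
    (hpos : ∀ᵐ t ∂γ, 0 < t) {μ : Measure (Fin (n + 1) → ℝ)} [IsProbabilityMeasure μ]
    (hμ : ∀ x : Fin (n + 1) → ℝ, (∀ i, x i ∈ Icc (0 : ℝ) 1) →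
      μ (Set.univ.pi fun i => Icc 0 (x i)) =
        ENNReal.ofReal (archCopula (n + 1) (williamson (n + 1) γ) x)) :
    ∃ σ : Measure (Fin (n + 1) → ℝ), IsProbabilityMeasure σ ∧
      μ = (γ.prod σ).map (repMap (n + 1) (williamson (n + 1) γ)) ∧
      ∀ᵐ p ∂(γ.prod σ), 0 < p.1 ∧
        (∀ i, repMap (n + 1) (williamson (n + 1) γ) p i ∈ Ioc (0 : ℝ) 1) ∧
        ∑ i, pseudoInv (williamson (n + 1) γ) (repMap (n + 1) (williamson (n + 1) γ) p i) =
          ENNReal.ofReal p.1⁻¹ := by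
  obtain ⟨σ, hσp, hσ, hσ'⟩ := exists_simplex_law n hn
  have h := williamson_isBasicGenerator hn hpos
  have hbox := prod_repMap_le hn hpos hσ hσ'
  set ψ := williamson (n + 1) γ with hψ
  have hFm := h.measurable_repMap (n + 1)
  have hF01 : ∀ p i, repMap (n + 1) ψ p i ∈ Icc (0 : ℝ) 1 := fun p i =>
    ⟨h.nonneg _ (le_max_right _ _), h.le_one (le_max_right _ _)⟩
  have hprob : IsProbabilityMeasure ((γ.prod σ).map (repMap (n + 1) ψ)) :=
    Measure.isProbabilityMeasure_map hFm.aemeasurable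
  have hcube : ∀ᵐ x ∂μ, ∀ i, x i ∈ Icc (0 : ℝ) 1 := by
    have h1 := hμ (fun _ => 1) (fun _ => by simp)
    have h2 : archCopula (n + 1) ψ (fun _ => 1) = 1 := by
      simp [archCopula, h.pseudoInv_one, psiExt, h.map_zero]
    rw [h2, ENNReal.ofReal_one, ← mem_ae_iff_prob_eq_one
      (MeasurableSet.univ_pi fun _ => measurableSet_Icc)] at h1
    filter_upwards [h1] with x hx i using hx i (mem_univ i)
  have hle_meas : ∀ x : Fin (n + 1) → ℝ, MeasurableSet {y : Fin (n + 1) → ℝ | ∀ i, y i ≤ x i} := by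
    intro x
    rw [ofPred_forall]
    exact MeasurableSet.iInter fun i => measurableSet_le (measurable_pi_apply i) measurable_const
  have heq : μ = (γ.prod σ).map (repMap (n + 1) ψ) := by
    refine ext_of_unit_boxes hcube ?_ fun x hx => ?_
    · have hm : MeasurableSet {x : Fin (n + 1) → ℝ | ∀ i, x i ∈ Icc (0 : ℝ) 1} := by
        rw [ofPred_forall]
        exact MeasurableSet.iInter fun i => measurable_pi_apply i measurableSet_Icc
      rw [ae_map_iff hFm.aemeasurable hm]
      exact ae_of_all _ hF01
    · rw [Measure.map_apply hFm (hle_meas x)]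
      refine Eq.trans ?_ (hbox x hx).symm
      rw [← hμ x hx]
      refine measure_congr ?_
      filter_upwards [hcube] with y hy
      refine propext ⟨fun hh i _ => ⟨(hy i).1, hh i⟩, fun hh i => (hh i (mem_univ i)).2⟩
  -- the margins have no atom at `0`, as `C(1, …, 0, …, 1) = ψ(φ(0)) = 0`
  have hF0 : ∀ᵐ p ∂(γ.prod σ), ∀ i, 0 < repMap (n + 1) ψ p i := by
    rw [ae_all_iff]
    intro i
    have h1 := hbox (fun j => if j = i then 0 else 1) (fun j => by split_ifs <;> simp)
    have h2 : archCopula (n + 1) ψ (fun j => if j = i then 0 else 1) = 0 := by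
      have : ∑ j, pseudoInv ψ (if j = i then 0 else 1) = pseudoInv ψ 0 := by
        rw [Finset.sum_eq_single i]
        · simp
        · intro j _ hj
          simp [hj, h.pseudoInv_one]
        · simp
      rw [archCopula, this, h.psiExt_pseudoInv_zero]
    rw [h2, ENNReal.ofReal_zero, measure_eq_zero_iff_ae_notMem] at h1
    filter_upwards [h1] with p hp
    by_contra! hle
    refine hp fun j => ?_
    by_cases hj : j = i
    · subst hj; simpa using hle
    · simpa [hj] using (hF01 p j).2
  refine ⟨σ, hσp, heq, ?_⟩
  filter_upwards [hF0, Measure.quasiMeasurePreserving_fst.ae hpos,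
    Measure.quasiMeasurePreserving_snd.ae hσ] with p hp0 hp1 hp2
  refine ⟨hp1, fun i => ⟨hp0 i, (hF01 p i).2⟩, ?_⟩
  have h1 : ∀ i, 0 ≤ p.2 i * p.1⁻¹ := fun i => mul_nonneg (hp2.1 i) (inv_nonneg.2 hp1.le)
  have h2 : ∀ i, pseudoInv ψ (repMap (n + 1) ψ p i) = ENNReal.ofReal (p.2 i * p.1⁻¹) := fun i => by
    have := h.pseudoInv_apply (le_max_right (p.2 i * p.1⁻¹) 0) (hp0 i)
    rwa [show ψ (max (p.2 i * p.1⁻¹) 0) = repMap (n + 1) ψ p i from rfl, max_eq_left (h1 i)] at this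
  rw [Finset.sum_congr rfl fun i _ => h2 i, ← ENNReal.ofReal_sum_of_nonneg fun i _ => h1 i,
    ← Finset.sum_mul, hp2.2, one_mul]

/-! ### Null sets and levels -/

/-- If `M` is Lebesgue null, so is the set of `x` with `1 / ∑ φ(xᵢ) ∈ M`: it is the image, under
the coordinatewise locally Lipschitz map `ψ`, of the preimage of `{r⁻¹ : r ∈ M}` under the
surjective linear form `z ↦ ∑ zᵢ`. -/
lemma volume_level_preimage_eq_zero {n : ℕ} {ψ : ℝ → ℝ} (h : IsBasicGenerator ψ)
    (hlip : ∀ ε : ℝ, 0 < ε → ∃ L : ℝ≥0, LipschitzOnWith L ψ (Ici ε))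
    {M : Set ℝ} (hM : volume M = 0) :
    volume {x : Fin (n + 1) → ℝ | (∀ i, x i ∈ Ioc (0 : ℝ) 1) ∧
      0 < (∑ i, pseudoInv ψ (x i)).toReal ∧ (∑ i, pseudoInv ψ (x i)).toReal⁻¹ ∈ M} = 0 := by
  set M' : Set ℝ := Inv.inv '' (M ∩ Ioi 0) with hM'
  have hM'0 : volume M' = 0 := by
    refine addHaar_image_eq_zero_of_differentiableOn_of_addHaar_eq_zero volume ?_
      (measure_mono_null inter_subset_left hM)
    exact differentiableOn_inv.mono fun x hx => ne_of_gt hx.2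
  set S : (Fin (n + 1) → ℝ) →ₗ[ℝ] ℝ := ∑ i, LinearMap.proj i with hS
  have hSapp : ∀ z, S z = ∑ i, z i := fun z => by simp [hS]
  have hSsurj : Function.Surjective S := fun r => ⟨Pi.single 0 r, by
    rw [hSapp, Finset.sum_pi_single']; simp⟩
  obtain ⟨c, _, hc⟩ := S.exists_map_addHaar_eq_smul_addHaar volume volume hSsurj
  have hN : volume (S ⁻¹' M') = 0 := by
    have hq : Measure.QuasiMeasurePreserving S volume volume :=
      ⟨S.continuous_of_finiteDimensional.measurable, by
        rw [hc]; exact Measure.smul_absolutelyContinuous⟩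
    exact hq.preimage_null hM'0
  set Φ : (Fin (n + 1) → ℝ) → (Fin (n + 1) → ℝ) := fun z i => ψ (z i) with hΦ
  set A : ℕ → Set (Fin (n + 1) → ℝ) := fun k =>
    S ⁻¹' M' ∩ {z | ∀ i, 1 / ((k : ℝ) + 1) ≤ z i} with hA
  have hAk : ∀ k, volume (Φ '' A k) = 0 := fun k => by
    obtain ⟨L, hL⟩ := hlip (1 / ((k : ℝ) + 1)) (by positivity)
    have hLΦ : LipschitzOnWith L Φ (A k) := by
      intro z hz w hw
      refine (edist_pi_le_iff).2 fun i => ?_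
      exact (hL (hz.2 i) (hw.2 i)).trans (mul_le_mul_right (edist_le_pi_edist z w i) _)
    have h1 := hLΦ.hausdorffMeasure_image_le
      (d := (Fintype.card (Fin (n + 1)) : ℝ)) (by positivity)
    rw [hausdorffMeasure_pi_real, measure_mono_null inter_subset_left hN, mul_zero] at h1
    exact le_antisymm h1 zero_le
  have hface : ∀ i : Fin (n + 1), volume {x : Fin (n + 1) → ℝ | x i = 1} = 0 := fun i => by
    rw [volume_pi]
    exact Measure.pi_hyperplane _ i 1
  refine measure_mono_null (t := (⋃ i, {x : Fin (n + 1) → ℝ | x i = 1}) ∪ ⋃ k, Φ '' A k) ?_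
    (measure_union_null (measure_iUnion_null hface) (measure_iUnion_null hAk))
  rintro x ⟨hx, hGpos, hGM⟩
  by_cases h1 : ∃ i, x i = 1
  · exact Or.inl (mem_iUnion.2 h1)
  push Not at h1
  refine Or.inr (mem_iUnion.2 ?_)
  have hG : ∑ i, pseudoInv ψ (x i) ≠ ∞ := fun hh => by simp [hh] at hGpos
  have hfin : ∀ i, pseudoInv ψ (x i) ≠ ∞ := fun i => ENNReal.sum_ne_top.1 hG i (Finset.mem_univ i)
  set z : Fin (n + 1) → ℝ := fun i => (pseudoInv ψ (x i)).toReal with hz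
  have hψz : ∀ i, ψ (z i) = x i := fun i => h.apply_toReal_pseudoInv (hx i).1 (hfin i)
  have hzpos : ∀ i, 0 < z i := fun i => by
    refine lt_of_le_of_ne ENNReal.toReal_nonneg fun hh => h1 i ?_
    rw [← hψz i, ← hh, h.map_zero]
  -- finitely many positive numbers are bounded below by some `1 / (k + 1)`
  obtain ⟨k, hk⟩ : ∃ k : ℕ, ∀ i, 1 / ((k : ℝ) + 1) ≤ z i := by
    choose K hK using fun i => exists_nat_one_div_lt (hzpos i)
    refine ⟨Finset.univ.sup K, fun i => le_trans ?_ (hK i).le⟩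
    have : (K i : ℝ) ≤ (Finset.univ.sup K : ℕ) := by
      exact_mod_cast Finset.le_sup (f := K) (Finset.mem_univ i)
    exact one_div_le_one_div_of_le (by positivity) (by linarith)
  refine ⟨k, z, ⟨?_, hk⟩, funext hψz⟩
  rw [ENNReal.toReal_sum fun i _ => hfin i] at hGpos hGM
  rw [mem_preimage, hSapp]
  exact ⟨(∑ i, z i)⁻¹, ⟨hGM, inv_pos.2 hGpos⟩, inv_inv _⟩

/-- For atomless `γ` the variable `ψ(1/T)`, `T ∼ γ`, has no atoms: `r ↦ ψ(1/r)` is injective on the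
support of `γ`. A common value `0` at `r < r'` is excluded because it means `γ (-∞, r') = 0`. -/
lemma ae_williamson_inv_ne {n : ℕ} (hn : n ≠ 0) {γ : Measure ℝ} [IsProbabilityMeasure γ]
    (hpos : ∀ᵐ t ∂γ, 0 < t) (hat : ∀ x : ℝ, γ {x} = 0) (t : ℝ) :
    ∀ᵐ r ∂γ, williamson (n + 1) γ r⁻¹ ≠ t := by
  have h := williamson_isBasicGenerator hn hpos
  have : NullSingletonClass γ := ⟨hat⟩
  have hlt : ∀ r r', 0 < r → r < r' → r ∈ γ.support →
      williamson (n + 1) γ r⁻¹ ≠ williamson (n + 1) γ r'⁻¹ := by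
    intro r r' hr hrr' hsupp heq
    have hr' := hr.trans hrr'
    rcases (h.nonneg r'⁻¹ (inv_nonneg.2 hr'.le)).eq_or_lt with h0 | h0
    · have h1 := measure_Iio_of_williamson_eq_zero hpos hr' h0.symm
      exact ((Measure.mem_support_iff_forall r).1 hsupp _ (Iio_mem_nhds hrr')).ne' h1
    · exact (h.strict _ _ (inv_nonneg.2 hr'.le) ((inv_lt_inv₀ hr' hr).2 hrr') h0).ne heq
  have hsub : {r | 0 < r ∧ r ∈ γ.support ∧ williamson (n + 1) γ r⁻¹ = t}.Subsingleton := by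
    rintro r ⟨hr, hrs, hrt⟩ r' ⟨hr', hrs', hrt'⟩
    rcases lt_trichotomy r r' with hh | hh | hh
    · exact absurd (hrt.trans hrt'.symm) (hlt r r' hr hh hrs)
    · exact hh
    · exact absurd (hrt'.trans hrt.symm) (hlt r' r hr' hh hrs')
  have h0 := measure_eq_zero_iff_ae_notMem.1 (hsub.measure_zero γ)
  filter_upwards [h0, hpos, Measure.support_mem_ae] with r h1 h2 h3 h4
  exact h1 ⟨h2, h3, h4⟩

/-- Let `γ ∈ P_{W_d}`, `ψ = W_d γ`, `C = C_ψ`, `μ_C` the associated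
measure. (a) If `γ` is purely atomic then there is an at most countable set
`T ⊆ [0,1)` with `μ_C(⋃_{t ∈ T} L_t) = 1`. (b) If `γ` is singular w.r.t. Lebesgue
measure and atomless, then `μ_C` is singular w.r.t. `λ_d` and `μ_C(L_t) = 0` for every
`t ∈ [0,1]`. -/
theorem archCopula_mass_of_atomic_or_singular_williamson
    (d : ℕ) (hd : 3 ≤ d) (γ : Measure ℝ) (hγ : memPW d γ)
    (μ : Measure (Fin d → ℝ)) (hprob : IsProbabilityMeasure μ)
    (hμ : ∀ x : Fin d → ℝ, (∀ i, x i ∈ Icc (0 : ℝ) 1) →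
      μ (Set.univ.pi fun i => Icc 0 (x i)) =
        ENNReal.ofReal (archCopula d (williamson d γ) x)) :
    ((∃ S : Set ℝ, S.Countable ∧ γ Sᶜ = 0) →
      ∃ T : Set ℝ, T.Countable ∧ T ⊆ Ico (0 : ℝ) 1 ∧
        μ (⋃ t ∈ T, levelSet d (williamson d γ) t) = 1) ∧
    ((γ ⟂ₘ volume ∧ ∀ x : ℝ, γ {x} = 0) →
      μ ⟂ₘ volume ∧ ∀ t ∈ Icc (0 : ℝ) 1, μ (levelSet d (williamson d γ) t) = 0) := by
  obtain ⟨n, rfl⟩ : ∃ n, d = n + 1 := ⟨d - 1, by omega⟩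
  have hn : n ≠ 0 := by omega
  obtain ⟨hγp, hneg, hzero, -⟩ := hγ
  have hpos : ∀ᵐ t ∂γ, 0 < t := by
    filter_upwards [measure_eq_zero_iff_ae_notMem.1 hneg,
      measure_eq_zero_iff_ae_notMem.1 hzero] with t h1 h2
    exact lt_of_le_of_ne (not_lt.1 h1) fun hh => h2 hh.symm
  have h := williamson_isBasicGenerator hn hpos
  obtain ⟨σ, hσp, heq, hrep⟩ := exists_representation hn hpos hμ
  have hlip : ∀ ε : ℝ, 0 < ε → ∃ L : ℝ≥0, LipschitzOnWith L (williamson (n + 1) γ) (Ici ε) :=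
    fun ε hε => williamson_lipschitzOnWith hn hpos hε
  set ψ := williamson (n + 1) γ with hψ
  have hFm := h.measurable_repMap (n + 1)
  have hC : ∀ᵐ p ∂(γ.prod σ), repMap (n + 1) ψ p ∈ levelSet (n + 1) ψ (ψ p.1⁻¹) := by
    filter_upwards [hrep] with p hp
    refine ⟨fun i => ⟨(hp.2.1 i).1.le, (hp.2.1 i).2⟩, ?_⟩
    rw [archCopula, hp.2.2, psiExt, if_neg ENNReal.ofReal_ne_top,
      ENNReal.toReal_ofReal (inv_nonneg.2 hp.1.le)]
  have hLm := h.measurableSet_levelSet (n + 1)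
  refine ⟨?_, ?_⟩
  · rintro ⟨S, hS, hSγ⟩
    have hT : ((fun t => ψ t⁻¹) '' (S ∩ Ioi 0)).Countable := (hS.mono inter_subset_left).image _
    refine ⟨_, hT, ?_, ?_⟩
    · rintro _ ⟨r, ⟨-, hr⟩, rfl⟩
      have hr' : 0 < r⁻¹ := inv_pos.2 hr
      refine ⟨h.nonneg _ hr'.le, ?_⟩
      have := h.strict 0 r⁻¹ le_rfl hr' (by rw [h.map_zero]; exact one_pos)
      rwa [h.map_zero] at this
    · have hm := MeasurableSet.biUnion hT fun t _ => hLm t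
      rw [← mem_ae_iff_prob_eq_one hm, heq]
      refine (ae_map_iff hFm.aemeasurable hm).2 ?_
      filter_upwards [hC, hrep, Measure.quasiMeasurePreserving_fst.ae
        (measure_eq_zero_iff_ae_notMem.1 hSγ)] with p h1 h2 h3
      exact mem_biUnion (mem_image_of_mem _ ⟨not_not.1 h3, h2.1⟩) h1
  · rintro ⟨hsing, hat⟩
    refine ⟨?_, fun t _ => ?_⟩
    · obtain ⟨N, hN, hN1, hN2⟩ := hsing
      set G : (Fin (n + 1) → ℝ) → ℝ≥0∞ := fun x => ∑ i, pseudoInv ψ (x i) with hG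
      set G' : (Fin (n + 1) → ℝ) → ℝ≥0∞ :=
        fun x => ∑ i, pseudoInv ψ (max 0 (min (x i) 1)) with hG'
      have hG'm : Measurable G' := Finset.measurable_sum _ fun i _ =>
        h.measurable_pseudoInv_clamp.comp (measurable_pi_apply i)
      set B : Set (Fin (n + 1) → ℝ) := {x | (∀ i, x i ∈ Ioc (0 : ℝ) 1) ∧
        0 < (G x).toReal ∧ (G x).toReal⁻¹ ∈ Nᶜ} with hB
      have hBm : MeasurableSet B := by
        have hB' : B = {x | ∀ i, x i ∈ Ioc (0 : ℝ) 1} ∩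
            ((fun x => (G' x).toReal) ⁻¹' Ioi 0 ∩ (fun x => (G' x).toReal⁻¹) ⁻¹' Nᶜ) := by
          ext x
          refine and_congr_right fun hx => ?_
          have : G' x = G x := Finset.sum_congr rfl fun i _ => by
            rw [min_eq_left (hx i).2, max_eq_right (hx i).1.le]
          simp only [mem_inter_iff, mem_preimage, this, mem_Ioi]
        rw [hB', ofPred_forall]
        exact (MeasurableSet.iInter fun i => measurable_pi_apply i measurableSet_Ioc).inter
          ((hG'm.ennreal_toReal measurableSet_Ioi).inter (hG'm.ennreal_toReal.inv hN.compl))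
      have hB0 : volume B = 0 := volume_level_preimage_eq_zero h hlip hN2
      refine Measure.MutuallySingular.mk (s := Bᶜ) (t := B) ?_ hB0 (by simp)
      rw [← mem_ae_iff, heq]
      refine (ae_map_iff hFm.aemeasurable hBm).2 ?_
      filter_upwards [hrep, Measure.quasiMeasurePreserving_fst.ae
        (measure_eq_zero_iff_ae_notMem.1 hN1)] with p h1 h2
      refine ⟨h1.2.1, ?_⟩
      simp only [hG]
      rw [h1.2.2, ENNReal.toReal_ofReal (inv_nonneg.2 h1.1.le), inv_inv]
      exact ⟨inv_pos.2 h1.1, h2⟩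
    · rw [heq, Measure.map_apply hFm (hLm t), measure_eq_zero_iff_ae_notMem]
      filter_upwards [hC, Measure.quasiMeasurePreserving_fst.ae
        (ae_williamson_inv_ne hn hpos hat t)] with p h1 h2 h3
      exact h2 (h1.2.symm.trans h3.2)
end
end

section
/- Let d ≥ 3 and let γ ∈ P_{W_d}. Then there exist sequences (γ_n^1)_{n∈ℕ}, (γ_n^2)_{n∈ℕ}, (γ_n^3)_{n∈ℕ} of measures in P_{W_d} such that every γ_n^1 is purely atomic, every γ_n^2 is singular with respect to Lebesgue measure on [0,∞) and has no atoms, every γ_n^3 is absolutely continuous with respect to Lebesgue measure on [0,∞), and each of the three sequences converges weakly on [0,∞) to γ. -/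
/-! The approximating measures are laws of perturbed products. Let `X ∼ γ` and let `Y ∼ ν` be
independent of `X` with values in `[0,1]`. With `r = 1 + 1/(n+1)`, round `X` up to an integer power
`D X` of `r` and put `Z = D X · (1 + Y/(n+1))`. Then `X ≤ Z ≤ r² X`. The functional
`g c = E[(1 - c Z)₊^(d-1)]` is continuous in `c` and, by monotonicity, `g 1 ≤ 1/2 ≤ g (r⁻²)`.
The intermediate value theorem yields `c ∈ [r⁻², 1]` with `g c = 1/2`, so the law of `c Z` lies in
`P_{W_d}`. As `r⁻² X ≤ c Z ≤ r² X`, these variables converge almost surely to `X`, hence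
weakly (`exists_scaling`).

Since `D X` takes countably many values, the law of `c Z` is a countable mixture of affine images
of `ν`, and so inherits its type from `ν`: a Dirac mass gives purely atomic laws, Lebesgue measure
on `[0,1]` gives absolutely continuous laws, and a singular atomless `ν` gives singular atomless
laws. A measure `ν` of the last kind is carried by the Liouville numbers in `[0,1]`, an
uncountable Borel set of measure zero (`exists_singular_atomless`). -/

open MeasureTheory Set Filter Topology
open scoped ENNReal NNReal Classical

noncomputable section

/-! ### Perturbed products -/

/-- The least integer power of `r` that is at least `x` (for `r > 1` and `x > 0`). -/
def roundUp (r x : ℝ) : ℝ := r ^ ⌈Real.logb r x⌉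

/-- The ratio `1 + 1/(n+1)` of the geometric grid used at step `n`. -/
def ratio (n : ℕ) : ℝ := 1 + 1 / ((n : ℝ) + 1)

lemma one_lt_ratio (n : ℕ) : 1 < ratio n := by
  unfold ratio
  have : (0 : ℝ) < 1 / ((n : ℝ) + 1) := by positivity
  linarith

lemma ratio_pos (n : ℕ) : 0 < ratio n := zero_lt_one.trans (one_lt_ratio n)

lemma tendsto_ratio : Tendsto ratio atTop (𝓝 1) := by
  have h := (tendsto_one_div_add_atTop_nhds_zero_nat (𝕜 := ℝ)).const_add 1
  rw [add_zero] at h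
  exact h

lemma measurable_roundUp (r : ℝ) : Measurable (roundUp r) := by
  have h1 : Measurable fun x : ℝ => ⌈Real.logb r x⌉ := by
    apply Int.measurable_ceil.comp
    unfold Real.logb
    exact Real.measurable_log.div_const _
  exact (measurable_of_countable fun k : ℤ => r ^ k).comp h1

lemma roundUp_pos {r : ℝ} (hr : 0 < r) (x : ℝ) : 0 < roundUp r x := zpow_pos hr _

lemma le_roundUp {r x : ℝ} (hr : 1 < r) (hx : 0 < x) : x ≤ roundUp r x := by
  unfold roundUp
  rw [← Real.rpow_intCast]
  calc x = r ^ Real.logb r x := (Real.rpow_logb (by linarith) hr.ne' hx).symm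
    _ ≤ _ := Real.rpow_le_rpow_of_exponent_le hr.le (Int.le_ceil _)

lemma roundUp_le {r x : ℝ} (hr : 1 < r) (hx : 0 < x) : roundUp r x ≤ r * x := by
  unfold roundUp
  rw [← Real.rpow_intCast]
  calc r ^ ((⌈Real.logb r x⌉ : ℤ) : ℝ) ≤ r ^ (Real.logb r x + 1) :=
        Real.rpow_le_rpow_of_exponent_le hr.le (Int.ceil_lt_add_one _).le
    _ = r * x := by
        rw [Real.rpow_add (by linarith), Real.rpow_logb (by linarith) hr.ne' hx, Real.rpow_one,
          mul_comm]

/-- The perturbed product `roundUp x · (1 + y/(n+1))`. -/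
def perturb (n : ℕ) (p : ℝ × ℝ) : ℝ := roundUp (ratio n) p.1 * (1 + p.2 / ((n : ℝ) + 1))

lemma measurable_perturb (n : ℕ) : Measurable (perturb n) := by
  unfold perturb
  exact ((measurable_roundUp _).comp measurable_fst).mul
    ((measurable_snd.div_const _).const_add _)

lemma le_perturb (n : ℕ) {p : ℝ × ℝ} (h1 : 0 < p.1) (h2 : p.2 ∈ Icc (0 : ℝ) 1) :
    p.1 ≤ perturb n p := by
  unfold perturb
  have h := le_roundUp (one_lt_ratio n) h1
  have : 0 ≤ p.2 / ((n : ℝ) + 1) := div_nonneg h2.1 (by positivity)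
  nlinarith

lemma perturb_le (n : ℕ) {p : ℝ × ℝ} (h1 : 0 < p.1) (h2 : p.2 ∈ Icc (0 : ℝ) 1) :
    perturb n p ≤ ratio n ^ 2 * p.1 := by
  unfold perturb
  have h := roundUp_le (one_lt_ratio n) h1
  have h3 : 1 + p.2 / ((n : ℝ) + 1) ≤ ratio n := by
    unfold ratio
    gcongr
    exact h2.2
  have h4 : 0 ≤ p.2 / ((n : ℝ) + 1) := div_nonneg h2.1 (by positivity)
  have h5 := ratio_pos n
  calc _ ≤ (ratio n * p.1) * ratio n := by gcongr
    _ = _ := by ring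

/-! ### The constraint defining `P_{W_d}` -/

/-- The truncated kernel `(1 - |t|)₊^(d-1)`. It agrees with `(1 - t)₊^(d-1)` on `[0,∞)`; the
absolute value makes it bounded on all of `ℝ`. -/
def kern (d : ℕ) (t : ℝ) : ℝ := max (1 - |t|) 0 ^ (d - 1)

lemma continuous_kern (d : ℕ) : Continuous (kern d) := by
  unfold kern
  fun_prop

lemma kern_nonneg (d : ℕ) (t : ℝ) : 0 ≤ kern d t := pow_nonneg (le_max_right _ _) _

lemma kern_le_one (d : ℕ) (t : ℝ) : kern d t ≤ 1 :=
  pow_le_one₀ (le_max_right _ _) (max_le (by linarith [abs_nonneg t]) zero_le_one)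

lemma norm_kern_le (d : ℕ) (t : ℝ) : ‖kern d t‖ ≤ 1 := by
  rw [Real.norm_of_nonneg (kern_nonneg d t)]
  exact kern_le_one d t

lemma kern_anti (d : ℕ) {s t : ℝ} (hs : 0 ≤ s) (hst : s ≤ t) : kern d t ≤ kern d s := by
  unfold kern
  rw [abs_of_nonneg hs, abs_of_nonneg (hs.trans hst)]
  gcongr

lemma ae_pos_of {γ : Measure ℝ} (h1 : γ (Iio 0) = 0) (h2 : γ {0} = 0) : ∀ᵐ x ∂γ, 0 < x := by
  have h3 : ∀ᵐ x ∂γ, x ∉ Iio (0 : ℝ) := measure_eq_zero_iff_ae_notMem.1 h1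
  have h4 : ∀ᵐ x ∂γ, x ∉ ({0} : Set ℝ) := measure_eq_zero_iff_ae_notMem.1 h2
  filter_upwards [h3, h4] with x h3 h4
  exact lt_of_le_of_ne (not_lt.1 h3) (Ne.symm h4)

/-- The defining constraint of `P_{W_d}` is the integral of a bounded continuous function. -/
lemma setIntegral_eq_kern {d : ℕ} (hd : 3 ≤ d) {γ : Measure ℝ} (h : ∀ᵐ x ∂γ, 0 < x) :
    ∫ t in Icc (0 : ℝ) 1, (1 - t) ^ (d - 1) ∂γ = ∫ t, kern d t ∂γ := by
  rw [← integral_indicator measurableSet_Icc]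
  apply integral_congr_ae
  filter_upwards [h] with t ht
  unfold kern
  rw [abs_of_pos ht]
  by_cases h1 : t ≤ 1
  · rw [indicator_of_mem (show t ∈ Icc (0 : ℝ) 1 from ⟨ht.le, h1⟩), max_eq_left (by linarith)]
  · rw [indicator_of_notMem (fun h' => h1 h'.2), max_eq_right (by linarith),
      zero_pow (by omega)]

/-! ### Scaling and weak convergence -/

/-- The law of `c · perturb n (X, Y)` for independent `X ∼ γ` and `Y ∼ ν`. -/
def approx (γ ν : Measure ℝ) (c : ℝ) (n : ℕ) : Measure ℝ :=
  (γ.prod ν).map fun p => c * perturb n p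

lemma memPW_iff {d : ℕ} (hd : 3 ≤ d) {γ : Measure ℝ} :
    memPW d γ ↔ IsProbabilityMeasure γ ∧ (∀ᵐ x ∂γ, 0 < x) ∧ ∫ t, kern d t ∂γ = 1 / 2 := by
  constructor
  · rintro ⟨h1, h2, h3, h4⟩
    have h5 := ae_pos_of h2 h3
    exact ⟨h1, h5, by rw [← setIntegral_eq_kern hd h5, h4]⟩
  · rintro ⟨h1, h2, h3⟩
    refine ⟨h1, measure_eq_zero_iff_ae_notMem.2 ?_, measure_eq_zero_iff_ae_notMem.2 ?_, ?_⟩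
    · filter_upwards [h2] with x hx
      exact not_lt.2 hx.le
    · filter_upwards [h2] with x hx
      exact hx.ne'
    · rw [setIntegral_eq_kern hd h2, h3]

/-- Scaling factors exist that put the laws of the perturbed products into `P_{W_d}`, and these
laws converge weakly to `γ`. -/
lemma exists_scaling {d : ℕ} (hd : 3 ≤ d) {γ : Measure ℝ} (hγ : memPW d γ) (ν : Measure ℝ)
    [IsProbabilityMeasure ν] (hν : ∀ᵐ y ∂ν, y ∈ Icc (0 : ℝ) 1) :
    ∃ c : ℕ → ℝ, (∀ n, 0 < c n) ∧ (∀ n, memPW d (approx γ ν (c n) n)) ∧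
      ∀ f : BoundedContinuousFunction ℝ ℝ,
        Tendsto (fun n => ∫ t, f t ∂(approx γ ν (c n) n)) atTop (𝓝 (∫ t, f t ∂γ)) := by
  obtain ⟨hprob, hpos, hker⟩ := (memPW_iff hd).1 hγ
  have hae : ∀ᵐ p ∂(γ.prod ν), 0 < p.1 ∧ p.2 ∈ Icc (0 : ℝ) 1 :=
    (Measure.quasiMeasurePreserving_fst.ae hpos).and (Measure.quasiMeasurePreserving_snd.ae hν)
  have hfst (f : ℝ → ℝ) (hf : Continuous f) : ∫ p, f p.1 ∂(γ.prod ν) = ∫ t, f t ∂γ := by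
    have h := integral_map (μ := γ.prod ν) measurable_fst.aemeasurable
      (f := f) hf.aestronglyMeasurable
    rw [← h, ← Measure.fst, Measure.fst_prod]
  have hmeas (c : ℝ) (n : ℕ) : Measurable fun p => c * perturb n p :=
    (measurable_perturb n).const_mul c
  have hint (d : ℕ) (g : ℝ × ℝ → ℝ) (hg : Measurable g) :
      Integrable (fun p => kern d (g p)) (γ.prod ν) :=
    Integrable.of_bound ((continuous_kern d).measurable.comp hg).aestronglyMeasurable 1
      (Eventually.of_forall fun p => norm_kern_le d _)
  have hex (n : ℕ) : ∃ c ∈ Icc ((ratio n ^ 2)⁻¹) 1,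
      ∫ p, kern d (c * perturb n p) ∂(γ.prod ν) = 1 / 2 := by
    have hr := ratio_pos n
    have hcont : Continuous fun c : ℝ => ∫ p, kern d (c * perturb n p) ∂(γ.prod ν) := by
      refine continuous_of_dominated (bound := fun _ => 1) (fun c => (hint d _ (hmeas c n)).1)
        (fun c => Eventually.of_forall fun p => norm_kern_le d _) (integrable_const _)
        (Eventually.of_forall fun p => ?_)
      exact (continuous_kern d).comp (continuous_id.mul continuous_const)
    have hle : (ratio n ^ 2)⁻¹ ≤ 1 := inv_le_one_of_one_le₀ (one_le_pow₀ (one_lt_ratio n).le)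
    rw [← hfst _ (continuous_kern d)] at hker
    have := intermediate_value_Icc' hle hcont.continuousOn (f := fun c : ℝ =>
      ∫ p, kern d (c * perturb n p) ∂(γ.prod ν))
    refine this ⟨?_, ?_⟩
    · rw [← hker]
      apply integral_mono_ae (hint d _ (hmeas 1 n)) (hint d _ measurable_fst)
      filter_upwards [hae] with p hp
      apply kern_anti d hp.1.le
      rw [one_mul]
      exact le_perturb n hp.1 hp.2
    · rw [← hker]
      apply integral_mono_ae (hint d _ measurable_fst) (hint d _ (hmeas _ n))
      filter_upwards [hae] with p hp
      apply kern_anti d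
      · exact mul_nonneg (by positivity) (hp.1.le.trans (le_perturb n hp.1 hp.2))
      · rw [inv_mul_le_iff₀ (by positivity)]
        exact perturb_le n hp.1 hp.2
  choose c hc hc2 using hex
  have hcpos (n : ℕ) : 0 < c n := lt_of_lt_of_le (by have := ratio_pos n; positivity) (hc n).1
  refine ⟨c, hcpos, fun n => (memPW_iff hd).2 ⟨?_, ?_, ?_⟩, fun f => ?_⟩
  · exact Measure.isProbabilityMeasure_map (hmeas _ n).aemeasurable
  · rw [approx, ae_map_iff (hmeas _ n).aemeasurable measurableSet_Ioi]
    filter_upwards [hae] with p hp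
    exact mul_pos (hcpos n) (hp.1.trans_le (le_perturb n hp.1 hp.2))
  · rw [approx, integral_map (hmeas _ n).aemeasurable (continuous_kern d).aestronglyMeasurable,
      hc2 n]
  · have h (n : ℕ) : ∫ t, f t ∂(approx γ ν (c n) n) =
        ∫ p, f (c n * perturb n p) ∂(γ.prod ν) := by
      rw [approx, integral_map (hmeas _ n).aemeasurable f.continuous.aestronglyMeasurable]
    simp_rw [h]
    rw [← hfst _ f.continuous]
    refine tendsto_integral_of_dominated_convergence (fun _ => ‖f‖)
      (fun n => (f.continuous.measurable.comp (hmeas _ n)).aestronglyMeasurable)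
      (integrable_const _) (fun n => Eventually.of_forall fun p => f.norm_coe_le_norm _) ?_
    filter_upwards [hae] with p hp
    apply (f.continuous.tendsto _).comp
    have h2 : Tendsto (fun n => ratio n ^ 2) atTop (𝓝 1) := by
      simpa using tendsto_ratio.pow 2
    refine tendsto_of_tendsto_of_tendsto_of_le_of_le
      (g := fun n => (ratio n ^ 2)⁻¹ * p.1) (h := fun n => ratio n ^ 2 * p.1) ?_ ?_ ?_ ?_
    · simpa using (h2.inv₀ one_ne_zero).mul_const p.1
    · simpa using h2.mul_const p.1
    · intro n
      exact mul_le_mul (hc n).1 (le_perturb n hp.1 hp.2) hp.1.le (hcpos n).le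
    · intro n
      have h3 := le_perturb n hp.1 hp.2
      have h4 := perturb_le n hp.1 hp.2
      have h5 := (hc n).2
      have h6 := hp.1
      change c n * perturb n p ≤ ratio n ^ 2 * p.1
      nlinarith

/-! ### Types of the approximating laws -/

/-- The map `y ↦ a * (1 + y / m)` pulls Lebesgue null sets back to null sets. -/
lemma volume_preimage_affine {a m : ℝ} (ha : a ≠ 0) (hm : m ≠ 0) {A : Set ℝ}
    (hA : volume A = 0) : volume {y : ℝ | a * (1 + y / m) ∈ A} = 0 := by
  have h := addHaar_image_eq_zero_of_differentiableOn_of_addHaar_eq_zero volume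
    (f := fun t : ℝ => (t / a - 1) * m) (s := A) (by fun_prop) hA
  refine measure_mono_null (fun y hy => (mem_image _ _ _).2 ⟨a * (1 + y / m), hy, ?_⟩) h
  field_simp
  ring

lemma volume_image_affine (a m : ℝ) {A : Set ℝ} (hA : volume A = 0) :
    volume ((fun y : ℝ => a * (1 + y / m)) '' A) = 0 :=
  addHaar_image_eq_zero_of_differentiableOn_of_addHaar_eq_zero volume (by fun_prop) hA

/-- If every affine preimage of `A` is `ν`-null, then `A` is null for the approximating law. -/
lemma approx_eq_zero {γ ν : Measure ℝ} [SFinite ν] {c : ℝ} (hc : 0 < c) {n : ℕ} {A : Set ℝ}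
    (hA : MeasurableSet A)
    (h : ∀ a : ℝ, 0 < a → ν {y : ℝ | a * (1 + y / ((n : ℝ) + 1)) ∈ A} = 0) :
    approx γ ν c n A = 0 := by
  have hm : Measurable fun p => c * perturb n p := (measurable_perturb n).const_mul c
  rw [approx, Measure.map_apply hm hA, Measure.measure_prod_null (hm hA)]
  refine Eventually.of_forall fun x => ?_
  have h1 := h (c * roundUp (ratio n) x) (mul_pos hc (roundUp_pos (ratio_pos n) x))
  simp only [mul_assoc] at h1
  exact h1

lemma affine_injective {a m : ℝ} (ha : a ≠ 0) (hm : m ≠ 0) :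
    Function.Injective fun y : ℝ => a * (1 + y / m) := by
  intro y z h
  have h1 := mul_left_cancel₀ ha h
  field_simp at h1
  linarith

/-- The approximating law is carried by countably many affine images of any set carrying `ν`. -/
lemma approx_compl_eq_zero {γ ν : Measure ℝ} [SFinite γ] [SFinite ν] {c : ℝ} (hc : 0 < c) (n : ℕ)
    {N : Set ℝ} (hNm : MeasurableSet N) (hN : ν Nᶜ = 0) :
    approx γ ν c n
      (⋃ k : ℤ, (fun y : ℝ => c * ratio n ^ k * (1 + y / ((n : ℝ) + 1))) '' N)ᶜ = 0 := by
  have hm : Measurable fun p => c * perturb n p := (measurable_perturb n).const_mul c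
  have hS : MeasurableSet
      (⋃ k : ℤ, (fun y : ℝ => c * ratio n ^ k * (1 + y / ((n : ℝ) + 1))) '' N) := by
    refine MeasurableSet.iUnion fun k => ?_
    have ha : c * ratio n ^ k ≠ 0 := (mul_pos hc (zpow_pos (ratio_pos n) k)).ne'
    exact hNm.image_of_measurable_injOn (by fun_prop)
      (affine_injective ha (by positivity)).injOn
  have h1 : ∀ᵐ y ∂ν, y ∈ N := by
    filter_upwards [measure_eq_zero_iff_ae_notMem.1 hN] with y hy
    exact not_not.1 hy
  have h2 : ∀ᵐ p ∂(γ.prod ν), p.2 ∈ N := Measure.quasiMeasurePreserving_snd.ae h1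
  refine measure_eq_zero_iff_ae_notMem.2 ?_
  rw [approx, ae_map_iff hm.aemeasurable hS.compl.compl]
  filter_upwards [h2] with p hp h
  refine h (mem_iUnion.2 ⟨⌈Real.logb (ratio n) p.1⌉, p.2, hp, ?_⟩)
  simp [perturb, roundUp, mul_assoc]

/-! ### A singular atomless measure -/

/-- There is an atomless probability measure on `[0,1]` carried by a Lebesgue null set: transport
Lebesgue measure on `[0,1]` by a Borel isomorphism of `ℝ` with the Liouville numbers in `[0,1]`. -/
lemma exists_singular_atomless : ∃ ν : Measure ℝ, IsProbabilityMeasure ν ∧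
    (∀ᵐ y ∂ν, y ∈ Icc (0 : ℝ) 1) ∧ (∀ x, ν {x} = 0) ∧ ∃ N : Set ℝ,
      MeasurableSet N ∧ volume N = 0 ∧ ν Nᶜ = 0 := by
  let L : Set ℝ := {x | Liouville x} ∩ Icc 0 1
  have hLm : MeasurableSet L := IsGδ.setOfPred_liouville.measurableSet.inter measurableSet_Icc
  have hL0 : volume L = 0 := measure_mono_null inter_subset_left volume_setOfPred_liouville
  have hLc : ¬ Countable L := by
    intro hc
    have hc' : L.Countable := hc
    -- Baire category: the complement of a countable set is residual.
    have h1 : ∀ᶠ x in residual ℝ, x ∉ L := by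
      have : ∀ᶠ x in residual ℝ, ∀ y ∈ L, x ≠ y := by
        rw [eventually_countable_ball hc']
        intro y _
        exact residual_of_dense_open isOpen_compl_singleton (dense_compl_singleton y)
      filter_upwards [this] with x hx hxL
      exact hx x hxL rfl
    have h2 := dense_of_mem_residual (eventually_residual_liouville.and h1)
    obtain ⟨x, hx, hx2⟩ := h2.inter_open_nonempty (Ioo 0 1) isOpen_Ioo ⟨1 / 2, by norm_num⟩
    exact hx2.2 ⟨hx2.1, Ioo_subset_Icc_self hx⟩
  have : StandardBorelSpace L := hLm.standardBorel
  let e : ℝ ≃ᵐ L := PolishSpace.measurableEquivOfNotCountable (not_countable) hLc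
  have hem : Measurable fun x => (e x : ℝ) := measurable_subtype_coe.comp e.measurable
  have hprob : IsProbabilityMeasure (volume.restrict (Icc (0 : ℝ) 1)) := ⟨by simp⟩
  refine ⟨(volume.restrict (Icc (0 : ℝ) 1)).map fun x => (e x : ℝ),
    Measure.isProbabilityMeasure_map hem.aemeasurable, ?_, fun x => ?_, L, hLm, hL0, ?_⟩
  · exact (ae_map_iff (p := fun y => y ∈ Icc (0 : ℝ) 1) hem.aemeasurable measurableSet_Icc).2
      (Eventually.of_forall fun x => (e x).2.2)
  · rw [Measure.map_apply hem (measurableSet_singleton x)]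
    refine Set.Subsingleton.measure_zero (fun a ha b hb => ?_) _
    exact e.injective (Subtype.ext (Eq.trans ha (Eq.symm hb)))
  · rw [Measure.map_apply hem hLm.compl]
    have h : (fun x => (e x : ℝ)) ⁻¹' Lᶜ = ∅ := eq_empty_of_forall_notMem fun x hx => hx (e x).2
    rw [h, measure_empty]

/-! ### The approximation theorem -/

/-- Every `γ ∈ P_{W_d}` is the weak limit of a sequence of purely
atomic measures in `P_{W_d}`, of a sequence of singular atomless measures in `P_{W_d}`,
and of a sequence of absolutely continuous measures in `P_{W_d}`. -/
theorem williamson_measure_approximation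
    (d : ℕ) (hd : 3 ≤ d) (γ : Measure ℝ) (hγ : memPW d γ) :
    ∃ Γ₁ Γ₂ Γ₃ : ℕ → Measure ℝ,
      (∀ n, memPW d (Γ₁ n) ∧ ∃ S : Set ℝ, S.Countable ∧ (Γ₁ n) Sᶜ = 0) ∧
      (∀ n, memPW d (Γ₂ n) ∧ (Γ₂ n) ⟂ₘ volume ∧ ∀ x : ℝ, (Γ₂ n) {x} = 0) ∧
      (∀ n, memPW d (Γ₃ n) ∧ (Γ₃ n) ≪ volume) ∧
      (∀ f : BoundedContinuousFunction ℝ ℝ,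
        Tendsto (fun n => ∫ t, f t ∂(Γ₁ n)) atTop (𝓝 (∫ t, f t ∂γ)) ∧
        Tendsto (fun n => ∫ t, f t ∂(Γ₂ n)) atTop (𝓝 (∫ t, f t ∂γ)) ∧
        Tendsto (fun n => ∫ t, f t ∂(Γ₃ n)) atTop (𝓝 (∫ t, f t ∂γ))) := by
  have hprobγ : IsProbabilityMeasure γ := hγ.1
  obtain ⟨ν, hν, hν01, hνat, N, hNm, hN0, hNν⟩ := exists_singular_atomless
  have hprob : IsProbabilityMeasure (volume.restrict (Icc (0 : ℝ) 1)) := ⟨by simp⟩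
  obtain ⟨c₁, hc₁, hm₁, ht₁⟩ := exists_scaling hd hγ (Measure.dirac 0)
    ((ae_dirac_iff measurableSet_Icc).2 (by simp))
  obtain ⟨c₂, hc₂, hm₂, ht₂⟩ := exists_scaling hd hγ ν hν01
  obtain ⟨c₃, hc₃, hm₃, ht₃⟩ := exists_scaling hd hγ (volume.restrict (Icc (0 : ℝ) 1))
    (ae_restrict_mem measurableSet_Icc)
  refine ⟨fun n => approx γ (Measure.dirac 0) (c₁ n) n, fun n => approx γ ν (c₂ n) n,
    fun n => approx γ (volume.restrict (Icc (0 : ℝ) 1)) (c₃ n) n,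
    fun n => ⟨hm₁ n, ?_⟩, fun n => ⟨hm₂ n, ?_, fun x => ?_⟩, fun n => ⟨hm₃ n, ?_⟩,
    fun f => ⟨ht₁ f, ht₂ f, ht₃ f⟩⟩
  · exact ⟨_, countable_iUnion fun k : ℤ => (countable_singleton _).image _,
      approx_compl_eq_zero (N := {0}) (hc₁ n) n (measurableSet_singleton 0) (by simp)⟩
  · refine Measure.MutuallySingular.mk (approx_compl_eq_zero (hc₂ n) n hNm hNν)
      (measure_iUnion_null fun k : ℤ =>
        volume_image_affine (c₂ n * ratio n ^ k) ((n : ℝ) + 1) hN0) ?_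
    rw [compl_union_self]
  · refine approx_eq_zero (hc₂ n) (measurableSet_singleton x) fun a ha => ?_
    have hs : {y : ℝ | a * (1 + y / ((n : ℝ) + 1)) ∈ ({x} : Set ℝ)}.Subsingleton :=
      fun y hy z hz => affine_injective ha.ne' (by positivity) (Eq.trans hy (Eq.symm hz))
    rcases hs.eq_empty_or_singleton with h | ⟨y, h⟩
    · rw [h, measure_empty]
    · rw [h, hνat]
  · refine Measure.AbsolutelyContinuous.mk fun A hA hA0 => ?_
    refine approx_eq_zero (hc₃ n) hA fun a ha => ?_
    exact Measure.absolutelyContinuous_of_le Measure.restrict_le_self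
      (volume_preimage_affine ha.ne' (by positivity) hA0)
end
end
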